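/- For every continuous f : Σ_N^+ → ℝ and every M ≥ 0, the Neumann derivative of G_μ f exists at every point of V_M, and d(G_μ f)(p) = lim_{m→∞}(−H_m(G_μ f)(p)) equals 0 if p ∈ V_M ∖ V_0, and equals −∫_{[p_1]} f dμ if p = (ṗ_1) ∈ V_0 is the constant sequence with value p_1. -/

import Mathlib

open Filter Topology MeasureTheory Finset Classical

noncomputable section

/-- The one-sided full shift space `Σ_N^+` on `N` symbols; coordinates are indexed
from `0`, so the paper's `x_1 x_2 ⋯` is `x 0, x 1, ⋯` here. It carries the product
of the discrete topology on `Fin N`. -/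
abbrev SSp (N : ℕ) : Type := ℕ → Fin N

/-- The level-`m` vertex set `V_m = {p : p_i = p_{i+1} for all i ≥ m+1}` (1-based),
i.e. the sequences that are constant from (0-based) coordinate `m` on.  It is
realized as a `Finset` via the parametrization by the first `m+1` coordinates;
see `mem_V` for the defining property. -/
noncomputable def V (N m : ℕ) : Finset (SSp N) :=
  (Finset.univ : Finset (Fin (m + 1) → Fin N)).image
    (fun w j => w ⟨min j m, by omega⟩)

lemma const_from (N m : ℕ) (p : SSp N) (h : ∀ i, m ≤ i → p i = p (i + 1)) :
    ∀ j, m ≤ j → p j = p m := by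
  intro j hj
  induction j with
  | zero => have : m = 0 := by omega
            simp [this]
  | succ k ih =>
      rcases Nat.lt_or_ge k m with hk | hk
      · have : m = k + 1 := by omega
        simp [this]
      · rw [← h k hk]
        exact ih hk

/-- Membership in `V N m` is exactly the paper's condition
`p_i = p_{i+1}` for all `i ≥ m+1` (1-based), i.e. `p i = p (i+1)` for all `i ≥ m`. -/
lemma mem_V {N m : ℕ} {p : SSp N} :
    p ∈ V N m ↔ ∀ i, m ≤ i → p i = p (i + 1) := by
  classical
  constructor
  · intro hp i hi
    simp only [V, Finset.mem_image] at hp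
    obtain ⟨w, -, rfl⟩ := hp
    have h1 : min i m = m := by omega
    have h2 : min (i + 1) m = m := by omega
    simp [h1, h2]
  · intro h
    simp only [V, Finset.mem_image]
    refine ⟨fun j => p j, Finset.mem_univ _, ?_⟩
    funext j
    rcases Nat.lt_or_ge j m with hj | hj
    · have : min j m = j := by omega
      simp [this]
    · have : min j m = m := by omega
      simp only [this]
      exact (const_from N m p h j hj).symm

/-- The deleted neighbourhood `U_{p,m} = {q ∈ V_m : q ≠ p, q_i = p_i for 1 ≤ i ≤ m}`
(1-based), i.e. `q` agrees with `p` on the first `m` (0-based: `i < m`) coordinates. -/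
noncomputable def U (N m : ℕ) (p : SSp N) : Finset (SSp N) :=
  (V N m).filter (fun q => q ≠ p ∧ ∀ i, i < m → q i = p i)

/-- `κ_p = min {j : p ∈ V_j}`. -/
noncomputable def kappa (N : ℕ) (p : SSp N) : ℕ := sInf {j | p ∈ V N j}

/-- The difference operator
`H_m u (p) = Σ_{i = κ_p}^{m} Σ_{q ∈ U_{p,i}} (u(q) − u(p))`. -/
noncomputable def H (N m : ℕ) (u : SSp N → ℝ) (p : SSp N) : ℝ :=
  ∑ i ∈ Finset.Icc (kappa N p) m, ∑ q ∈ U N i p, (u q - u p)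

/-- The Dirichlet form `E_{H_m}(u, v) = − Σ_{p ∈ V_m} u(p) · H_m v(p)`. -/
noncomputable def EH (N m : ℕ) (u v : SSp N → ℝ) : ℝ :=
  -∑ p ∈ V N m, u p * H N m v p

/-- The cylinder set `[p_1 ⋯ p_m]`, determined by the first `m` coordinates of `p`. -/
def cyl (N m : ℕ) (p : SSp N) : Set (SSp N) := {x | ∀ i, i < m → x i = p i}

/-- `χ_p^m` : the indicator function of the cylinder set `[p_1 ⋯ p_{m+1}]`. -/
noncomputable def chi (N m : ℕ) (p : SSp N) : SSp N → ℝ :=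
  (cyl N (m + 1) p).indicator 1

/-- `u ∈ dom E`: `u` is continuous and the energy
`E(u) = lim_m E_{H_m}(u|_{V_m})` exists (and is finite). -/
def MemDomE (N : ℕ) (u : SSp N → ℝ) : Prop :=
  Continuous u ∧ ∃ L : ℝ, Tendsto (fun m => EH N m u u) atTop (nhds L)

/-- `v ∈ dom_M E`: `v` has finite energy and vanishes on the boundary `V_M`. -/
def MemDomME (N M : ℕ) (v : SSp N → ℝ) : Prop :=
  MemDomE N v ∧ ∀ p ∈ V N M, v p = 0

/-- `u ∈ 𝒟_M` with `Δ u = f` (strong formulation with boundary `V_M`):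
`u` and `f` are continuous and
`lim_{m → ∞} max_{p ∈ V_m ∖ V_M} |N^{m+1} H_m u(p) − f(p)| = 0`. -/
def IsLaplacianOn (N M : ℕ) (u f : SSp N → ℝ) : Prop :=
  Continuous u ∧ Continuous f ∧
    ∀ ε : ℝ, 0 < ε → ∃ m₀ : ℕ, ∀ m, m₀ ≤ m → ∀ p ∈ V N m, p ∉ V N M →
      |(N : ℝ) ^ (m + 1) * H N m u p - f p| < ε

/-- `u ∈ D_μ` with `Δ u = f` (original definition of the Laplacian):
`u` and `f` are continuous and
`lim_{m → ∞} max_{p ∈ V_m ∖ V_{m−1}} |N^{m+1} H_m u(p) − f(p)| = 0`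
(the level is written `m+1` to avoid natural subtraction). -/
def IsLaplacianDmu (N : ℕ) (u f : SSp N → ℝ) : Prop :=
  Continuous u ∧ Continuous f ∧
    ∀ ε : ℝ, 0 < ε → ∃ m₀ : ℕ, ∀ m, m₀ ≤ m → ∀ p ∈ V N (m + 1), p ∉ V N m →
      |(N : ℝ) ^ (m + 2) * H N (m + 1) u p - f p| < ε

/-- `μ` is the equidistributed Bernoulli measure:
`μ([p_1 ⋯ p_m]) = N^{−m}` for every cylinder set. -/
def IsBernoulli (N : ℕ) (μ : Measure (SSp N)) : Prop :=
  ∀ (m : ℕ) (p : SSp N), μ (cyl N m p) = (N : ENNReal)⁻¹ ^ m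

/-- `ρ(x,y) = min {i : x_i ≠ y_i}` (1-based; `0`-based first disagreement plus one). -/
noncomputable def rho (N : ℕ) (x y : SSp N) : ℕ := sInf {i | x i ≠ y i} + 1

/-- The matrix `(G_m)_{pq}`: `2/N` if `q = p`, `1/N` if `q ∈ U_{p,m}`, `0` otherwise. -/
noncomputable def Gmat (N m : ℕ) (p q : SSp N) : ℝ :=
  if q = p then 2 / N else if q ∈ U N m p then 1 / N else 0

/-- The Green's function
`g(x,y) = Σ_{m=1}^{ρ(x,y)−1} Σ_{r,s ∈ V_m ∖ V_{m−1}} (G_m)_{rs} χ_r^m(x) χ_s^m(y)`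
for `ρ(x,y) > 1`, and `g(x,y) = 0` for `ρ(x,y) = 1` (the sum is then empty). -/
noncomputable def greenFn (N : ℕ) (x y : SSp N) : ℝ :=
  ∑ m ∈ Finset.Icc 1 (rho N x y - 1),
    ∑ r ∈ (V N m).filter (fun r => r ∉ V N (m - 1)),
      ∑ s ∈ (V N m).filter (fun s => s ∉ V N (m - 1)),
        Gmat N m r s * chi N m r x * chi N m s y

/-- The Green's operator `G_μ f (x) = ∫_{Σ_N^+ ∖ {x}} g(x,y) f(y) dμ(y)`. -/
noncomputable def Gop (N : ℕ) (μ : Measure (SSp N)) (f : SSp N → ℝ) (x : SSp N) : ℝ :=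
  ∫ y in ({x}ᶜ : Set (SSp N)), greenFn N x y * f y ∂μ

/-- The level-`m` contribution to the Green's function, as a function of the coordinates
`0, …, m`. It vanishes for `m = 0`. -/
def greenTerm (N m : ℕ) (x y : SSp N) : ℝ :=
  if (∀ i, i < m → x i = y i) ∧ x (m - 1) ≠ x m ∧ y (m - 1) ≠ y m then
    if x m = y m then 2 / N else 1 / N
  else 0

/-- The element of `V N m` that agrees with `x` on the coordinates `0, …, m`. -/
def trunc (N m : ℕ) (x : SSp N) : SSp N := fun j => x (min j m)

lemma trunc_mem_V (N m : ℕ) (x : SSp N) : trunc N m x ∈ V N m := by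
  rw [mem_V]
  intro i hi
  simp [trunc, hi, Nat.le_succ_of_le hi]

lemma trunc_mem_V_pred {N m : ℕ} (hm : 1 ≤ m) (x : SSp N) :
    trunc N m x ∈ V N (m - 1) ↔ x (m - 1) = x m := by
  rw [mem_V]
  constructor
  · intro h
    have := h (m - 1) le_rfl
    simpa [trunc, Nat.sub_add_cancel hm] using this
  · intro h i hi
    rcases Nat.lt_or_ge i m with hi' | hi'
    · obtain rfl : i = m - 1 := by omega
      simpa [trunc, Nat.sub_add_cancel hm] using h
    · simp [trunc, hi', Nat.le_succ_of_le hi']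

lemma eq_trunc {N m : ℕ} {r x : SSp N} (hr : r ∈ V N m) (h : ∀ i, i < m + 1 → x i = r i) :
    r = trunc N m x := by
  funext j
  rcases Nat.lt_or_ge j m with hj | hj
  · simp [trunc, hj.le, h j (by omega)]
  · simp [trunc, hj, h m (by omega), const_from N m r (mem_V.1 hr) j hj]

lemma chi_trunc (N m : ℕ) (x : SSp N) : chi N m (trunc N m x) x = 1 := by
  have : x ∈ cyl N (m + 1) (trunc N m x) := by
    intro i hi
    simp [trunc, Nat.le_of_lt_succ hi]
  simp [chi, this]

lemma chi_eq_zero {N m : ℕ} {r x : SSp N} (hr : r ∈ V N m) (h : r ≠ trunc N m x) :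
    chi N m r x = 0 :=
  Set.indicator_of_notMem (fun hx : x ∈ cyl N (m + 1) r => h (eq_trunc hr hx)) _

/-- Summing against `χ_r^m(x)` over `V_m ∖ V_{m-1}` evaluates at the truncation of `x`. -/
lemma sum_mul_chi {N m : ℕ} (hm : 1 ≤ m) (F : SSp N → ℝ) (x : SSp N) :
    ∑ r ∈ (V N m).filter (fun r => r ∉ V N (m - 1)), F r * chi N m r x
      = if x (m - 1) ≠ x m then F (trunc N m x) else 0 := by
  have hmem : trunc N m x ∈ (V N m).filter (fun r => r ∉ V N (m - 1)) ↔ x (m - 1) ≠ x m := by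
    rw [Finset.mem_filter, trunc_mem_V_pred hm]
    exact and_iff_right (trunc_mem_V N m x)
  have hzero : ∀ r ∈ (V N m).filter (fun r => r ∉ V N (m - 1)), r ≠ trunc N m x →
      F r * chi N m r x = 0 := fun r hr hne => by
    rw [chi_eq_zero (Finset.mem_filter.1 hr).1 hne, mul_zero]
  split_ifs with h
  · rw [Finset.sum_eq_single_of_mem _ (hmem.2 h) hzero, chi_trunc, mul_one]
  · exact Finset.sum_eq_zero fun r hr => hzero r hr fun he => h (hmem.1 (he ▸ hr))

lemma Gmat_trunc {N m : ℕ} {x y : SSp N} (h : ∀ i, i < m → x i = y i) :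
    Gmat N m (trunc N m x) (trunc N m y) = if x m = y m then 2 / (N : ℝ) else 1 / N := by
  have heq : trunc N m y = trunc N m x ↔ x m = y m := by
    constructor
    · intro he
      simpa [trunc] using (congrFun he m).symm
    · intro hm
      refine (eq_trunc (trunc_mem_V N m y) fun i hi => ?_)
      rw [trunc, Nat.min_eq_left (Nat.le_of_lt_succ hi)]
      rcases Nat.lt_or_ge i m with hi' | hi'
      · exact h i hi'
      · rwa [show i = m by omega]
  by_cases hm : x m = y m
  · simp [Gmat, heq, hm]
  · have hU : trunc N m y ∈ U N m (trunc N m x) := by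
      refine Finset.mem_filter.2 ⟨trunc_mem_V N m y, fun he => hm (heq.1 he), fun i hi => ?_⟩
      simp [trunc, hi.le, h i hi]
    simp [Gmat, heq, hm, hU]

lemma sum_Gmat_mul_chi {N m : ℕ} (hm : 1 ≤ m) {x y : SSp N} (h : ∀ i, i < m → x i = y i) :
    ∑ r ∈ (V N m).filter (fun r => r ∉ V N (m - 1)),
      ∑ s ∈ (V N m).filter (fun s => s ∉ V N (m - 1)),
        Gmat N m r s * chi N m r x * chi N m s y = greenTerm N m x y := by
  simp_rw [sum_mul_chi hm (fun s => Gmat N m _ s * chi N m _ x) y]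
  by_cases hy : y (m - 1) ≠ y m
  · simp only [if_pos hy]
    rw [sum_mul_chi hm (fun r => Gmat N m r (trunc N m y)) x, Gmat_trunc h]
    by_cases hx : x (m - 1) ≠ x m
    · rw [if_pos hx]
      exact (if_pos ⟨h, hx, hy⟩).symm
    · rw [if_neg hx, greenTerm, if_neg fun hc => hx hc.2.1]
  · simp only [if_neg hy, Finset.sum_const_zero]
    rw [greenTerm, if_neg fun hc => hy hc.2.2]

/-- Off the diagonal, the Green's function of a point of `V_n` is a sum of finitely many
functions of finitely many coordinates. -/
lemma greenFn_eq_sum {N n : ℕ} {x y : SSp N} (hx : x ∈ V N n) (hxy : y ≠ x) :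
    greenFn N x y = ∑ m ∈ Finset.range (n + 1), greenTerm N m x y := by
  obtain ⟨k, hk⟩ := Function.ne_iff.1 hxy.symm
  set d := sInf {i | x i ≠ y i} with hd
  have hdne : x d ≠ y d := Nat.sInf_mem (s := {i | x i ≠ y i}) ⟨k, hk⟩
  have hagree : ∀ i, i < d → x i = y i := fun i hi => not_not.1 (Nat.notMem_of_lt_sInf hi)
  have hrho : rho N x y - 1 = d := by simp [rho, hd]
  have hT : greenFn N x y = ∑ m ∈ Finset.Icc 1 d, greenTerm N m x y := by
    rw [greenFn, hrho]
    refine Finset.sum_congr rfl fun m hm => ?_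
    rw [Finset.mem_Icc] at hm
    exact sum_Gmat_mul_chi hm.1 fun i hi => hagree i (hi.trans_le hm.2)
  have h0 : greenTerm N 0 x y = 0 := by simp [greenTerm]
  have hbig : ∀ m, n < m → greenTerm N m x y = 0 := fun m hm => by
    have := mem_V.1 hx (m - 1) (by omega)
    rw [Nat.sub_add_cancel (by omega)] at this
    simp [greenTerm, this]
  have hfar : ∀ m, d < m → greenTerm N m x y = 0 := fun m hm =>
    if_neg fun hc => hdne (hc.1 d hm)
  rw [hT]
  trans ∑ m ∈ Finset.range (max d n + 1), greenTerm N m x y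
  · refine Finset.sum_subset (fun m hm => ?_) fun m _ hm => ?_
    · simp only [Finset.mem_Icc, Finset.mem_range] at *
      omega
    · rcases Nat.eq_zero_or_pos m with rfl | hpos
      · exact h0
      · simp only [Finset.mem_Icc] at hm
        exact hfar m (by omega)
  · refine (Finset.sum_subset (fun m hm => ?_) fun m _ hm => hbig m ?_).symm
    · simp only [Finset.mem_range] at *
      omega
    · simp only [Finset.mem_range] at hm
      omega

lemma continuous_of_forall_eq {N m : ℕ} {h : SSp N → ℝ}
    (hh : ∀ y y' : SSp N, (∀ i, i ≤ m → y i = y' i) → h y = h y') : Continuous h := by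
  refine continuous_iff_continuousAt.2 fun y => ?_
  have hev : ∀ᶠ z in 𝓝 y, ∀ i ∈ Finset.range (m + 1), z i = y i := by
    rw [Filter.eventually_all_finset]
    intro i _
    exact (continuous_apply i).continuousAt.eventually_mem
      ((isOpen_discrete {y i}).mem_nhds rfl)
  refine (continuousAt_const (y := h y)).congr ?_
  filter_upwards [hev] with z hz
  exact hh _ _ fun i hi => (hz i (Finset.mem_range.2 (by omega))).symm

lemma continuous_greenTerm (N m : ℕ) (x : SSp N) : Continuous (greenTerm N m x) := by
  refine continuous_of_forall_eq (m := m) fun y y' h => ?_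
  have h1 : (∀ i, i < m → x i = y i) ↔ ∀ i, i < m → x i = y' i :=
    forall₂_congr fun i hi => by rw [h i hi.le]
  simp only [greenTerm, h1, h m le_rfl, h (m - 1) (Nat.sub_le m 1)]

lemma greenTerm_congr {N m : ℕ} {x x' y : SSp N} (h : ∀ i, i ≤ m → x i = x' i) :
    greenTerm N m x y = greenTerm N m x' y := by
  have h1 : (∀ i, i < m → x i = y i) ↔ ∀ i, i < m → x' i = y i :=
    forall₂_congr fun i hi => by rw [h i hi.le]
  simp only [greenTerm, h1, h m le_rfl, h (m - 1) (Nat.sub_le m 1)]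

lemma integrable_of_continuous {N : ℕ} (μ : Measure (SSp N)) [IsFiniteMeasure μ]
    {h : SSp N → ℝ} (hh : Continuous h) : Integrable h μ :=
  hh.integrable_of_hasCompactSupport (HasCompactSupport.of_compactSpace h)

lemma measurableSet_cyl (N m : ℕ) (p : SSp N) : MeasurableSet (cyl N m p) := by
  have : cyl N m p = ⋂ i, ⋂ _ : i < m, {x | x i = p i} := by
    ext x
    simp [cyl]
  rw [this]
  exact MeasurableSet.iInter fun i => MeasurableSet.iInter fun _ =>
    (measurableSet_singleton (p i)).preimage (measurable_pi_apply i)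

lemma IsBernoulli.tendsto_measure_cyl {N : ℕ} (hN : 2 ≤ N) {μ : Measure (SSp N)}
    (hμ : IsBernoulli N μ) (p : SSp N) :
    Tendsto (fun m => μ (cyl N m p)) atTop (𝓝 0) := by
  have hlt : (N : ENNReal)⁻¹ < 1 := by
    rw [ENNReal.inv_lt_one]
    exact_mod_cast hN
  exact (ENNReal.tendsto_pow_atTop_nhds_zero_of_lt_one hlt).congr fun m => (hμ m p).symm

lemma IsBernoulli.measure_singleton {N : ℕ} (hN : 2 ≤ N) {μ : Measure (SSp N)}
    (hμ : IsBernoulli N μ) (p : SSp N) : μ {p} = 0 := by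
  refine le_antisymm (ge_of_tendsto' (hμ.tendsto_measure_cyl hN p) fun m => ?_) zero_le
  refine measure_mono ?_
  rintro x rfl i _
  rfl

lemma IsBernoulli.tendsto_setIntegral_cyl {N : ℕ} (hN : 2 ≤ N) {μ : Measure (SSp N)}
    [IsFiniteMeasure μ] (hμ : IsBernoulli N μ) {f : SSp N → ℝ} (hf : Continuous f)
    (p : SSp N) : Tendsto (fun m => ∫ y in cyl N m p, f y ∂μ) atTop (𝓝 0) :=
  (integrable_of_continuous μ hf).tendsto_setIntegral_nhds_zero (hμ.tendsto_measure_cyl hN p)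

lemma IsBernoulli.Gop_eq {N n : ℕ} (hN : 2 ≤ N) {μ : Measure (SSp N)}
    (hμ : IsBernoulli N μ) (f : SSp N → ℝ) {x : SSp N} (hx : x ∈ V N n) :
    Gop N μ f x = ∫ y, (∑ m ∈ Finset.range (n + 1), greenTerm N m x y) * f y ∂μ := by
  have hnull : ∀ᵐ y ∂μ, y ≠ x := by
    rw [ae_iff]
    simpa using hμ.measure_singleton hN x
  rw [Gop, setIntegral_congr_set (t := Set.univ), setIntegral_univ]
  · refine integral_congr_ae ?_
    filter_upwards [hnull] with y hy
    rw [greenFn_eq_sum hx hy]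
  · rw [eventuallyEq_univ]
    exact hnull

lemma IsBernoulli.Gop_sub_Gop {N i : ℕ} (hN : 2 ≤ N) {μ : Measure (SSp N)}
    [IsFiniteMeasure μ] (hμ : IsBernoulli N μ) {f : SSp N → ℝ} (hf : Continuous f)
    {p q : SSp N} (hp : p ∈ V N i) (hq : q ∈ V N i) (h : ∀ j, j < i → q j = p j) :
    Gop N μ f q - Gop N μ f p
      = ∫ y, (greenTerm N i q y - greenTerm N i p y) * f y ∂μ := by
  have hint : ∀ x, Integrable
      (fun y => (∑ m ∈ Finset.range (i + 1), greenTerm N m x y) * f y) μ := fun x =>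
    integrable_of_continuous μ
      ((continuous_finsetSum _ fun m _ => continuous_greenTerm N m x).mul hf)
  rw [hμ.Gop_eq hN f hp, hμ.Gop_eq hN f hq, ← integral_sub (hint q) (hint p)]
  congr 1 with y
  have hlow : ∑ m ∈ Finset.range i, greenTerm N m q y
      = ∑ m ∈ Finset.range i, greenTerm N m p y :=
    Finset.sum_congr rfl fun m hm =>
      greenTerm_congr fun j hj => h j (hj.trans_lt (Finset.mem_range.1 hm))
  rw [Finset.sum_range_succ, Finset.sum_range_succ, hlow]
  ring

/-- `U_{p,i}` is parametrized by the symbols other than `p_i`. -/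
lemma sum_U {N i : ℕ} {p : SSp N} (hp : p ∈ V N i) (F : SSp N → ℝ) :
    ∑ q ∈ U N i p, F q
      = ∑ c ∈ Finset.univ.erase (p i), F (fun j => if j < i then p j else c) := by
  have hinv : ∀ q ∈ U N i p, (fun j => if j < i then p j else q i) = q := fun q hq => by
    obtain ⟨hqV, -, hqp⟩ := Finset.mem_filter.1 hq
    funext j
    split_ifs with hj
    · exact (hqp j hj).symm
    · exact (const_from N i q (mem_V.1 hqV) j (not_lt.1 hj)).symm
  refine Finset.sum_bij' (fun q _ => q i) (fun c _ j => if j < i then p j else c)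
    (fun q hq => ?_) (fun c hc => ?_) hinv (fun c _ => by simp) fun q hq => by rw [hinv q hq]
  · refine Finset.mem_erase.2 ⟨fun he => (Finset.mem_filter.1 hq).2.1 ?_, Finset.mem_univ _⟩
    rw [← hinv q hq]
    funext j
    split_ifs with hj
    · rfl
    · rw [he, const_from N i p (mem_V.1 hp) j (not_lt.1 hj)]
  · refine Finset.mem_filter.2 ⟨mem_V.2 fun j hj => ?_, fun he => ?_, fun j hj => by simp [hj]⟩
    · simp [hj.not_gt, (Nat.le_succ_of_le hj).not_gt]
    · refine (Finset.mem_erase.1 hc).1 ?_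
      simpa using congrFun he i

/-- The rows of the matrix with entries `2/N` on and `1/N` off the diagonal, indexed by the
symbols other than `a`, sum to `1`. -/
lemma sum_entries {N : ℕ} (hN : 2 ≤ N) (a b : Fin N) :
    ∑ c : Fin N, (if a ≠ c ∧ a ≠ b then if c = b then (2 : ℝ) / N else 1 / N else 0)
      = if a ≠ b then 1 else 0 := by
  have hN0 : (N : ℝ) ≠ 0 := by positivity
  by_cases hab : a = b
  · simp [hab]
  · have hterm : ∀ c : Fin N,
        (if a ≠ c ∧ a ≠ b then if c = b then (2 : ℝ) / N else 1 / N else 0)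
          = 1 / N + (if c = b then 1 / (N : ℝ) else 0) - (if c = a then 1 / (N : ℝ) else 0) := by
      intro c
      by_cases hca : c = a
      · subst hca
        simp [hab]
      · by_cases hcb : c = b
        · subst hcb
          simp [hab, hca]
          ring
        · simp [hab, hca, hcb, Ne.symm hca]
    simp only [hterm, Finset.sum_sub_distrib, Finset.sum_add_distrib]
    simp [hab, hN0]

lemma greenTerm_update {N i : ℕ} (hi : 1 ≤ i) (p y : SSp N) (c : Fin N) :
    greenTerm N i (fun j => if j < i then p j else c) y
      = (cyl N i p).indicator (fun _ => if p (i - 1) ≠ c ∧ p (i - 1) ≠ y i then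
          if c = y i then (2 : ℝ) / N else 1 / N else 0) y := by
  by_cases hy : y ∈ cyl N i p
  · have hy1 : y (i - 1) = p (i - 1) := hy (i - 1) (by omega)
    have hag : ∀ j, j < i → (if j < i then p j else c) = y j := fun j hj => by
      rw [if_pos hj, hy j hj]
    rw [Set.indicator_of_mem hy]
    simp only [greenTerm, lt_irrefl, if_false, hy1, if_pos (show i - 1 < i by omega)]
    exact if_congr (and_iff_right hag) rfl rfl
  · rw [Set.indicator_of_notMem hy, greenTerm, if_neg]
    rintro ⟨h, -⟩
    refine hy fun j hj => ?_
    have := h j hj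
    rw [if_pos hj] at this
    exact this.symm

lemma mem_cyl_succ {N i : ℕ} {p y : SSp N} :
    y ∈ cyl N (i + 1) p ↔ y ∈ cyl N i p ∧ y i = p i := by
  constructor
  · exact fun h => ⟨fun j hj => h j (by omega), h i (by omega)⟩
  · rintro ⟨h, hi⟩ j hj
    rcases Nat.lt_or_ge j i with hj' | hj'
    · exact h j hj'
    · rwa [show j = i by omega]

lemma sum_greenTerm_sub {N i : ℕ} (hN : 2 ≤ N) (hi : 1 ≤ i) {p : SSp N} (hp : p ∈ V N i)
    (y : SSp N) :
    ∑ q ∈ U N i p, (greenTerm N i q y - greenTerm N i p y)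
      = (if p (i - 1) = p i then (cyl N i p).indicator 1 y else 0)
        - (cyl N (i + 1) p).indicator 1 y := by
  have hN0 : (N : ℝ) ≠ 0 := by positivity
  have hpp : (fun j => if j < i then p j else p i) = p := by
    funext j
    split_ifs with hj
    · rfl
    · exact (const_from N i p (mem_V.1 hp) j (not_lt.1 hj)).symm
  have hpT := greenTerm_update hi p y (p i)
  rw [hpp] at hpT
  rw [sum_U hp (fun q => greenTerm N i q y - greenTerm N i p y),
    Finset.sum_erase _ (by rw [hpp, sub_self]), Finset.sum_sub_distrib, Finset.sum_const,
    Finset.card_univ, Fintype.card_fin, nsmul_eq_mul, hpT]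
  simp only [greenTerm_update hi]
  by_cases hy : y ∈ cyl N i p
  · simp only [Set.indicator_of_mem hy]
    rw [sum_entries hN]
    by_cases hyi : y i = p i
    · rw [Set.indicator_of_mem (mem_cyl_succ.2 ⟨hy, hyi⟩), hyi]
      by_cases hpi : p (i - 1) = p i
      · simp [hpi]
      · simp [hpi]
        field_simp
        norm_num
    · rw [Set.indicator_of_notMem fun h => hyi (mem_cyl_succ.1 h).2]
      by_cases hpi : p (i - 1) = p i
      · simp [hpi, Ne.symm hyi]
      · by_cases hpy : p (i - 1) = y i
        · simp [hpy, hyi]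
        · simp [hpi, hpy, Ne.symm hyi, hN0]
  · simp [Set.indicator_of_notMem hy, Set.indicator_of_notMem fun h => hy (mem_cyl_succ.1 h).1]

lemma IsBernoulli.sum_Gop_sub {N i : ℕ} (hN : 2 ≤ N) {μ : Measure (SSp N)}
    [IsFiniteMeasure μ] (hμ : IsBernoulli N μ) {f : SSp N → ℝ} (hf : Continuous f)
    (hi : 1 ≤ i) {p : SSp N} (hp : p ∈ V N i) :
    ∑ q ∈ U N i p, (Gop N μ f q - Gop N μ f p)
      = (if p (i - 1) = p i then ∫ y in cyl N i p, f y ∂μ else 0)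
        - ∫ y in cyl N (i + 1) p, f y ∂μ := by
  have hint : ∀ m, Integrable ((cyl N m p).indicator f) μ := fun m =>
    (integrable_of_continuous μ hf).indicator (measurableSet_cyl N m p)
  have hind : ∀ m y, (cyl N m p).indicator 1 y * f y = (cyl N m p).indicator f y :=
    fun m y => by by_cases hy : y ∈ cyl N m p <;> simp [hy]
  have hdiff : ∀ q ∈ U N i p, Gop N μ f q - Gop N μ f p
      = ∫ y, (greenTerm N i q y - greenTerm N i p y) * f y ∂μ := fun q hq =>
    hμ.Gop_sub_Gop hN hf hp (Finset.mem_filter.1 hq).1 (Finset.mem_filter.1 hq).2.2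
  rw [Finset.sum_congr rfl hdiff, ← integral_finsetSum]
  · simp_rw [← Finset.sum_mul, sum_greenTerm_sub hN hi hp]
    rw [← integral_indicator (measurableSet_cyl N i p),
      ← integral_indicator (measurableSet_cyl N (i + 1) p)]
    split_ifs with h
    · simp_rw [sub_mul, hind]
      exact integral_sub (hint i) (hint (i + 1))
    · simp_rw [zero_sub, neg_mul, hind]
      exact integral_neg _
  · exact fun q _ => integrable_of_continuous μ
      (((continuous_greenTerm N i q).sub (continuous_greenTerm N i p)).mul hf)

lemma mem_V_of_kappa_le {N n i : ℕ} {p : SSp N} (hp : p ∈ V N n) (hi : kappa N p ≤ i) :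
    p ∈ V N i := by
  have hmem : p ∈ V N (kappa N p) := Nat.sInf_mem (s := {j | p ∈ V N j}) ⟨n, hp⟩
  exact mem_V.2 fun j hj => mem_V.1 hmem j (hi.trans hj)

lemma apply_pred_kappa_ne {N n : ℕ} {p : SSp N} (hp : p ∈ V N n) (hk : 1 ≤ kappa N p) :
    p (kappa N p - 1) ≠ p (kappa N p) := by
  intro he
  have hnot : p ∉ V N (kappa N p - 1) :=
    Nat.notMem_of_lt_sInf (s := {j | p ∈ V N j}) (show kappa N p - 1 < kappa N p by omega)
  refine hnot (mem_V.2 fun j hj => ?_)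
  rcases Nat.lt_or_ge j (kappa N p) with hj' | hj'
  · obtain rfl : j = kappa N p - 1 := by omega
    rwa [Nat.sub_add_cancel hk]
  · exact mem_V.1 (mem_V_of_kappa_le hp le_rfl) j hj'

lemma apply_succ_eq_of_kappa_le {N n m : ℕ} {p : SSp N} (hp : p ∈ V N n)
    (hm : kappa N p ≤ m) : p (m + 1 - 1) = p (m + 1) :=
  mem_V.1 (mem_V_of_kappa_le hp le_rfl) m hm

lemma H_succ {N m : ℕ} (u : SSp N → ℝ) {p : SSp N} (hm : kappa N p ≤ m) :
    H N (m + 1) u p = H N m u p + ∑ q ∈ U N (m + 1) p, (u q - u p) := by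
  rw [H, H, Finset.sum_Icc_succ_top (Nat.le_succ_of_le hm)]

lemma IsBernoulli.H_Gop_of_one_le_kappa {N n m : ℕ} (hN : 2 ≤ N) {μ : Measure (SSp N)}
    [IsFiniteMeasure μ] (hμ : IsBernoulli N μ) {f : SSp N → ℝ} (hf : Continuous f)
    {p : SSp N} (hp : p ∈ V N n) (hk : 1 ≤ kappa N p) (hm : kappa N p ≤ m) :
    H N m (Gop N μ f) p = -∫ y in cyl N (m + 1) p, f y ∂μ := by
  induction m, hm using Nat.le_induction with
  | base =>
    rw [H, Finset.Icc_self, Finset.sum_singleton,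
      hμ.sum_Gop_sub hN hf hk (mem_V_of_kappa_le hp le_rfl),
      if_neg (apply_pred_kappa_ne hp hk), zero_sub]
  | succ m hm ih =>
    rw [H_succ _ hm, ih, hμ.sum_Gop_sub hN hf (by omega) (mem_V_of_kappa_le hp (by omega)),
      if_pos (apply_succ_eq_of_kappa_le hp hm)]
    ring

lemma IsBernoulli.H_Gop_of_mem_V_zero {N : ℕ} (hN : 2 ≤ N) {μ : Measure (SSp N)}
    [IsFiniteMeasure μ] (hμ : IsBernoulli N μ) {f : SSp N → ℝ} (hf : Continuous f)
    {p : SSp N} (hp : p ∈ V N 0) (m : ℕ) :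
    H N m (Gop N μ f) p
      = ∫ y in cyl N 1 p, f y ∂μ - ∫ y in cyl N (m + 1) p, f y ∂μ := by
  have hk : kappa N p = 0 := Nat.le_zero.1 (Nat.sInf_le hp)
  induction m with
  | zero =>
    rw [H, hk, Finset.Icc_self, Finset.sum_singleton, zero_add, sub_self]
    refine Finset.sum_eq_zero fun q hq => ?_
    rw [hμ.Gop_sub_Gop hN hf hp (Finset.mem_filter.1 hq).1 fun j hj => absurd hj j.not_lt_zero]
    simp [greenTerm]
  | succ m ih =>
    have hm : kappa N p ≤ m := hk ▸ m.zero_le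
    rw [H_succ _ hm, ih, hμ.sum_Gop_sub hN hf (by omega) (mem_V_of_kappa_le hp (by omega)),
      if_pos (apply_succ_eq_of_kappa_le hp hm)]
    ring

/-- for continuous `f` and `M ≥ 0`, the Neumann derivative of
`G_μ f` exists at every point of `V_M`; it equals `0` on `V_M ∖ V_0` and equals
`−∫_{[p_1]} f dμ` at the constant sequence `p ∈ V_0`. -/
theorem statement17 (N : ℕ) (hN : 2 ≤ N)
    (μ : Measure (SSp N)) [IsProbabilityMeasure μ] (hμ : IsBernoulli N μ)
    (f : SSp N → ℝ) (hf : Continuous f) (M : ℕ) :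
    (∀ p ∈ V N M, p ∉ V N 0 →
      Tendsto (fun m => -(H N m (Gop N μ f) p)) atTop (nhds 0)) ∧
    (∀ p ∈ V N 0,
      Tendsto (fun m => -(H N m (Gop N μ f) p)) atTop
        (nhds (-∫ x in cyl N 1 p, f x ∂μ))) := by
  have hlim := fun p => (tendsto_add_atTop_iff_nat 1).2 (hμ.tendsto_setIntegral_cyl hN hf p)
  refine ⟨fun p hp hp0 => ?_, fun p hp => ?_⟩
  · have hk : 1 ≤ kappa N p := by
      by_contra! h
      exact hp0 (mem_V_of_kappa_le hp (by omega))
    refine (hlim p).congr' ?_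
    filter_upwards [eventually_ge_atTop (kappa N p)] with m hm
    rw [hμ.H_Gop_of_one_le_kappa hN hf hp hk hm, neg_neg]
  · simp_rw [hμ.H_Gop_of_mem_V_zero hN hf hp]
    simpa using ((hlim p).const_sub (∫ x in cyl N 1 p, f x ∂μ)).neg
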